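/- For every positive integer n, the strict inequalities 2^{-p_{n+1}} < θ(n) < 2·2^{-p_{n+1}} hold. -/

import Mathlib

/-!
Expanding `1 / (2 ^ d - 1) = ∑_{d ∣ m, m ≥ 1} 2 ^ (-m)` and exchanging the sums gives
`∑_{d ∣ P} μ(d) / (2 ^ d - 1) = ∑_{m ≥ 1} 2 ^ (-m) ∑_{d ∣ gcd(m, P)} μ(d)`, and by Möbius inversion
this is `∑ 2 ^ (-m)` over the `m ≥ 1` coprime to `P` (`hasSum_coprime`).

For `P = p_n#`, the integer `1` is coprime to `P` and contributes `1/2`; every other `m` coprime to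
`P` is at least `p = p_{n+1}` (`le_of_coprime_primorialN`). The terms `m = p` and `m = p ^ 2` give
the strict lower bound. The upper bound compares with the sum over all `m ≥ p`, which is
`2 * 2 ^ (-p)`; it is strict because `p + 1` is even and so not coprime to `P`.
-/

open scoped BigOperators

/-- `nthPrime k` is the k-th prime with 1-based indexing: p₁ = 2, p₂ = 3, ... -/
noncomputable def nthPrime (k : ℕ) : ℕ := Nat.nth Nat.Prime (k - 1)

/-- `primorialN n` is `p_n# = p₁ ⬝ p₂ ⋯ p_n`, the product of the first `n` primes. -/
noncomputable def primorialN (n : ℕ) : ℕ := ∏ i ∈ Finset.range n, Nat.nth Nat.Prime i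

/-- `theta n = -1/2 + ∑_{d ∣ p_n#} μ(d)/(2^d - 1)`. -/
noncomputable def theta (n : ℕ) : ℝ :=
  -1/2 + ∑ d ∈ (primorialN n).divisors,
    ((ArithmeticFunction.moebius d : ℤ) : ℝ) / (2 ^ d - 1)

lemma hasSum_multiples {d : ℕ} (hd : d ≠ 0) :
    HasSum (fun m : ℕ => if m ≠ 0 ∧ d ∣ m then (1 / 2 : ℝ) ^ m else 0) (1 / (2 ^ d - 1)) := by
  have hinj : Function.Injective (fun k : ℕ => d * (k + 1)) := fun a b h => by
    have := Nat.eq_of_mul_eq_mul_left (Nat.pos_of_ne_zero hd) h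
    omega
  rw [← hinj.hasSum_iff]
  · have h1 : (1 : ℝ) < 2 ^ d := one_lt_pow₀ (by norm_num) hd
    have hr : (1 / 2 : ℝ) ^ d < 1 := pow_lt_one₀ (by norm_num) (by norm_num) hd
    have h := (hasSum_geometric_of_lt_one (by positivity) hr).mul_left ((1 / 2 : ℝ) ^ d)
    convert h using 1
    · rfl
    · funext k
      have : d * (k + 1) ≠ 0 := by positivity
      simp only [Function.comp_apply]
      rw [if_pos ⟨this, dvd_mul_right _ _⟩]
      ring
    · have h2 : (2 : ℝ) ^ d - 1 ≠ 0 := by linarith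
      rw [one_div_pow]
      field_simp
  · intro m hm
    rw [if_neg]
    rintro ⟨h0, k, rfl⟩
    obtain ⟨j, rfl⟩ := Nat.exists_eq_succ_of_ne_zero (right_ne_zero_of_mul h0)
    exact hm ⟨j, rfl⟩

lemma sum_moebius_divisors {g : ℕ} :
    ∑ d ∈ g.divisors, ((ArithmeticFunction.moebius d : ℤ) : ℝ) = if g = 1 then 1 else 0 := by
  have h := congrArg (fun f : ArithmeticFunction ℤ => f g)
    ArithmeticFunction.coe_zeta_mul_moebius
  simp only [ArithmeticFunction.coe_zeta_mul_apply, ArithmeticFunction.one_apply] at h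
  exact_mod_cast h

/-- The Lambert series expansion: the Möbius sum over divisors of `P` is the sum of `2 ^ (-m)` over
the positive `m` coprime to `P`. -/
lemma hasSum_coprime {P : ℕ} (hP : P ≠ 0) :
    HasSum (fun m : ℕ => if m ≠ 0 ∧ m.Coprime P then (1 / 2 : ℝ) ^ m else 0)
      (∑ d ∈ P.divisors, ((ArithmeticFunction.moebius d : ℤ) : ℝ) / (2 ^ d - 1)) := by
  have h : HasSum (fun m : ℕ => ∑ d ∈ P.divisors, ((ArithmeticFunction.moebius d : ℤ) : ℝ) *
      (if m ≠ 0 ∧ d ∣ m then (1 / 2 : ℝ) ^ m else 0))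
      (∑ d ∈ P.divisors, ((ArithmeticFunction.moebius d : ℤ) : ℝ) * (1 / (2 ^ d - 1))) :=
    hasSum_sum fun d hd =>
      (hasSum_multiples (Nat.pos_of_mem_divisors hd).ne').mul_left _
  convert h using 1
  · funext m
    by_cases hm : m = 0
    · simp [hm]
    · have hdiv : P.divisors.filter (· ∣ m) = (m.gcd P).divisors := by
        ext d
        simp [Nat.dvd_gcd_iff, hP, and_comm]
      simp only [hm, ne_eq, not_false_eq_true, true_and, mul_ite, mul_zero]
      rw [← Finset.sum_filter, hdiv, ← Finset.sum_mul, sum_moebius_divisors]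
      simp [Nat.Coprime]
  · simp [div_eq_mul_inv]

lemma primorialN_ne_zero (n : ℕ) : primorialN n ≠ 0 :=
  Finset.prod_ne_zero_iff.mpr fun i _ => (Nat.prime_nth_prime i).ne_zero

lemma coprime_primorialN (n : ℕ) : (Nat.nth Nat.Prime n).Coprime (primorialN n) := by
  refine Nat.Coprime.prod_right fun i hi => ?_
  rw [Nat.coprime_primes (Nat.prime_nth_prime n) (Nat.prime_nth_prime i)]
  exact (Nat.nth_strictMono Nat.infinite_setOfPred_prime (Finset.mem_range.mp hi)).ne'

lemma le_of_coprime_primorialN {n m : ℕ} (h0 : m ≠ 0) (h1 : m ≠ 1)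
    (h : m.Coprime (primorialN n)) : Nat.nth Nat.Prime n ≤ m := by
  have hq := Nat.minFac_prime h1
  refine le_trans ?_ (Nat.minFac_le (Nat.pos_of_ne_zero h0))
  by_contra! hlt
  rw [← Nat.nth_count hq] at hlt
  have hc : Nat.count Nat.Prime m.minFac < n :=
    (Nat.nth_strictMono Nat.infinite_setOfPred_prime).lt_iff_lt.mp hlt
  have hdvd : m.minFac ∣ primorialN n := by
    have := Finset.dvd_prod_of_mem (Nat.nth Nat.Prime) (Finset.mem_range.mpr hc)
    rwa [Nat.nth_count hq] at this
  exact Nat.not_coprime_of_dvd_of_dvd hq.one_lt (Nat.minFac_dvd m) hdvd h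

lemma hasSum_tail (p : ℕ) :
    HasSum (fun m : ℕ => if p ≤ m then (1 / 2 : ℝ) ^ m else 0) (2 * (1 / 2) ^ p) := by
  rw [← (add_right_injective p).hasSum_iff]
  · convert hasSum_geometric_two.mul_left ((1 / 2 : ℝ) ^ p) using 1
    · rfl
    · funext k
      simp [pow_add, mul_comm]
    · ring
  · intro m hm
    rw [if_neg]
    exact fun h => hm ⟨m - p, Nat.add_sub_cancel' h⟩

/-- For every positive integer `n`, `2^(-p_{n+1}) < θ(n) < 2 ⬝ 2^(-p_{n+1})`. -/
theorem theta_bounds (n : ℕ) (hn : 0 < n) :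
    (2 : ℝ) ^ (-(nthPrime (n + 1) : ℤ)) < theta n ∧
      theta n < 2 * (2 : ℝ) ^ (-(nthPrime (n + 1) : ℤ)) := by
  have hsum := hasSum_coprime (primorialN_ne_zero n)
  have hp : (2 : ℝ) ^ (-(nthPrime (n + 1) : ℤ)) = (1 / 2) ^ Nat.nth Nat.Prime n := by
    simp [nthPrime]
  have hcop := coprime_primorialN n
  have hpr := Nat.prime_nth_prime n
  have h2 : 2 ∣ primorialN n := by
    have := Finset.dvd_prod_of_mem (Nat.nth Nat.Prime) (Finset.mem_range.mpr hn)
    rwa [Nat.nth_prime_zero_eq_two] at this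
  have hmin : ∀ m, m ≠ 0 → m ≠ 1 → m.Coprime (primorialN n) → Nat.nth Nat.Prime n ≤ m :=
    fun m => le_of_coprime_primorialN
  rw [hp, theta]
  generalize Nat.nth Nat.Prime n = p at *
  constructor
  · have hlt : p < p ^ 2 := by nlinarith [hpr.two_le]
    have h := sum_le_hasSum ({1, p, p ^ 2} : Finset ℕ)
      (fun m _ => by split_ifs <;> positivity) hsum
    rw [Finset.sum_insert (by simp [hpr.one_lt.ne, (hpr.one_lt.trans hlt).ne]),
      Finset.sum_pair hlt.ne, if_pos ⟨one_ne_zero, Nat.coprime_one_left _⟩,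
      if_pos ⟨hpr.ne_zero, hcop⟩, if_pos ⟨pow_ne_zero _ hpr.ne_zero, hcop.pow_left 2⟩] at h
    have : (0 : ℝ) < (1 / 2) ^ p ^ 2 := by positivity
    linarith
  · have hodd : ¬ (p + 1).Coprime (primorialN n) := by
      refine Nat.not_coprime_of_dvd_of_dvd one_lt_two ?_ h2
      have : p ≠ 2 := by
        rintro rfl
        exact Nat.not_coprime_of_dvd_of_dvd one_lt_two dvd_rfl h2 hcop
      have := hpr.eq_two_or_odd
      omega
    have h := hasSum_lt (i := p + 1) (fun m => ?_) ?_ hsum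
      ((hasSum_ite_eq 1 (1 / 2 : ℝ)).add (hasSum_tail p))
    · linarith
    · dsimp only
      split_ifs with hm h1 hle hle h1 hle hle
      · subst h1
        norm_num
      · subst h1
        norm_num
      · simp
      · exact absurd (hmin m hm.1 h1 hm.2) hle
      all_goals positivity
    · simp [hodd, hpr.ne_zero]
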